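/- For every prime p, let p_succ denote the smallest prime strictly larger than p. Then (p_succ - p)/p tends to 0 as p tends to infinity. -/

import Mathlib

/-- The smallest prime strictly larger than `p`. -/
noncomputable def succPrime (p : ℕ) : ℕ := sInf {q : ℕ | q.Prime ∧ p < q}

open MeasureTheory Filter Topology Complex FourierTransform

lemma fourier_eq (φ : ℝ → ℂ) (y : ℝ) : 𝓕 φ y = ∫ t, φ t * cexp (-(2 * Real.pi * t * y * I)) := by
  rw [Real.fourier_real_eq_integral_exp_smul]
  congr 1; ext t
  rw [smul_eq_mul, mul_comm]; push_cast; ring_nf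

lemma exists_h0 : ∃ h : ℝ → ℂ, ContDiff ℝ (⊤ : ℕ∞) h ∧ HasCompactSupport h ∧ 0 < (h 0).re ∧
    ∀ y, ∃ r : ℝ, 0 ≤ r ∧ 𝓕 h y = r := by
  let b : ContDiffBump (0 : ℝ) := ⟨1, 2, by norm_num, by norm_num⟩
  let g : ℝ → ℂ := fun x => (b x : ℂ)
  have hg : ContDiff ℝ (⊤ : ℕ∞) g := Complex.ofRealCLM.contDiff.comp b.contDiff
  have hgc : HasCompactSupport g := b.hasCompactSupport.comp_left (g := fun x : ℝ => (x : ℂ)) (by simp)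
  have hgi : Integrable g := hg.continuous.integrable_of_hasCompactSupport hgc
  refine ⟨convolution g g (ContinuousLinearMap.mul ℂ ℂ) volume, ?_, ?_, ?_, ?_⟩
  · have := HasCompactSupport.contDiff_convolution_left (𝕜 := ℝ) (μ := volume) (ContinuousLinearMap.mul ℝ ℂ) hgc hg hgi.locallyIntegrable
    exact this
  · exact HasCompactSupport.convolution (𝕜 := ℂ) _ hgc hgc
  · rw [convolution_def]
    have : ∀ t : ℝ, (ContinuousLinearMap.mul ℂ ℂ) (g t) (g (0 - t)) = ((b t * b t : ℝ) : ℂ) := by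
      intro t
      simp [g, b.neg]
    simp_rw [this, integral_complex_ofReal, ofReal_re]
    apply Continuous.integral_pos_of_hasCompactSupport_nonneg_nonzero (x := 0)
    · exact b.continuous.mul b.continuous
    · exact b.hasCompactSupport.mul_left
    · intro t; exact mul_self_nonneg _
    · have : b 0 = 1 := b.one_of_mem_closedBall (by simp [b])
      simp [this]
  · intro y
    rw [Real.fourier_mul_convolution_eq hgi hgi]
    have hreal : (starRingEnd ℂ) (𝓕 g y) = 𝓕 g y := by
      rw [fourier_eq, ← integral_conj, ← integral_neg_eq_self]
      congr 1; ext t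
      have h2 : (starRingEnd ℂ) 2 = 2 := Complex.conj_ofNat 2
      simp [g, b.neg, ← Complex.exp_conj, h2]
    obtain ⟨r, hr⟩ := Complex.conj_eq_iff_real.mp hreal
    exact ⟨r * r, mul_self_nonneg _, by rw [hr]; push_cast; rfl⟩

lemma hcs_iter2 (h : ℝ → ℂ) (hc : HasCompactSupport h) (n : ℕ) : HasCompactSupport (iteratedDeriv n h) := by
  induction n with
  | zero => simpa using hc
  | succ n ih => rw [iteratedDeriv_succ]; exact ih.deriv

set_option maxHeartbeats 1000000 in
lemma exists_kernel (δ : ℝ) (hδ : 0 < δ) : ∃ φ : ℝ → ℂ, ContDiff ℝ (⊤ : ℕ∞) φ ∧ HasCompactSupport φ ∧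
    0 < (φ 0).re ∧ ∀ y, δ ≤ |y| → (𝓕 φ y).re ≤ 0 := by
  obtain ⟨h, h1, h2, h3, h4⟩ := exists_h0
  obtain ⟨a, ha, hpos⟩ : ∃ a : ℝ, 0 < a ∧
      0 < δ ^ 2 * (h 0).re + (4 * Real.pi ^ 2)⁻¹ * (a ^ 2 * (iteratedDeriv 2 h 0).re) := by
    have hc : Continuous (fun a : ℝ => δ ^ 2 * (h 0).re + (4 * Real.pi ^ 2)⁻¹ * (a ^ 2 * (iteratedDeriv 2 h 0).re)) := by
      fun_prop
    have h0 := hc.tendsto 0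
    have : ∀ᶠ a in 𝓝[>] (0:ℝ), 0 < δ ^ 2 * (h 0).re + (4 * Real.pi ^ 2)⁻¹ * (a ^ 2 * (iteratedDeriv 2 h 0).re) := by
      apply (h0.mono_left nhdsWithin_le_nhds).eventually
      apply lt_mem_nhds
      simp; positivity
    obtain ⟨a, ha⟩ := (this.and self_mem_nhdsWithin).exists
    exact ⟨a, ha.2, ha.1⟩
  let k : ℝ → ℂ := fun t => h (a * t)
  have hk : ContDiff ℝ (⊤ : ℕ∞) k := h1.comp (contDiff_const.mul contDiff_id)
  have hkc : HasCompactSupport k := by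
    have := h2.comp_homeomorph (Homeomorph.mulLeft₀ a ha.ne')
    exact this
  have hkn : ∀ n : ℕ, Integrable (iteratedDeriv n k) := fun n =>
    (hk.continuous_iteratedDeriv n (by exact_mod_cast le_top)).integrable_of_hasCompactSupport (hcs_iter2 k hkc n)
  have hF : ∀ y, 𝓕 k y = (a⁻¹ : ℝ) * 𝓕 h (y / a) := by
    intro y
    rw [fourier_eq, fourier_eq]
    have := Measure.integral_comp_mul_left (fun t : ℝ => h t * cexp (-(2 * Real.pi * t * (y / a : ℝ) * I))) a
    rw [abs_of_pos (by positivity)] at this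
    rw [← real_smul, ← this]
    congr 1; ext t
    simp only [k]
    congr 2
    have : (a : ℂ) ≠ 0 := by exact_mod_cast ha.ne'
    push_cast
    field_simp
  have hF2 : 𝓕 (iteratedDeriv 2 k) = fun x : ℝ => (2 * ↑Real.pi * I * ↑x) ^ 2 • 𝓕 k x :=
    Real.fourier_iteratedDeriv (N := ⊤) hk (fun n _ => hkn n) (by exact_mod_cast le_top)
  have hk2 : ContDiff ℝ (⊤ : ℕ∞) (iteratedDeriv 2 k) := by
    rw [iteratedDeriv_eq_iterate]
    exact ContDiff.iterate_deriv 2 hk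
  have hFsum : ∀ y : ℝ, 𝓕 (fun t => (δ ^ 2 : ℝ) • k t + ((4 * Real.pi ^ 2)⁻¹ : ℝ) • iteratedDeriv 2 k t) y
      = ((δ ^ 2 - y ^ 2 : ℝ) : ℂ) * 𝓕 k y := by
    intro y
    have e2 := congrFun hF2 y
    rw [fourier_eq] at e2
    rw [fourier_eq]
    have i0 : ∀ f : ℝ → ℂ, Integrable f → Integrable fun t : ℝ => f t * cexp (-(2 * Real.pi * t * y * I)) := by
      intro f hf
      apply hf.mul_bdd (c := 1) (by fun_prop)
      refine Eventually.of_forall fun t => ?_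
      rw [Complex.norm_exp]; simp
    have e : ∀ t : ℝ, ((δ ^ 2 : ℝ) • k t + ((4 * Real.pi ^ 2)⁻¹ : ℝ) • iteratedDeriv 2 k t) * cexp (-(2 * Real.pi * t * y * I))
      = (δ ^ 2 : ℝ) * (k t * cexp (-(2 * Real.pi * t * y * I))) +
        ((4 * Real.pi ^ 2)⁻¹ : ℝ) * (iteratedDeriv 2 k t * cexp (-(2 * Real.pi * t * y * I))) := by
      intro t; simp only [real_smul]; ring
    simp_rw [e]
    rw [integral_add, integral_const_mul, integral_const_mul, e2, ← fourier_eq, smul_eq_mul]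
    · have : (Real.pi : ℂ) ≠ 0 := by exact_mod_cast Real.pi_ne_zero
      push_cast
      field_simp
      simp only [I_sq]
      ring
    · exact (i0 _ (by simpa using hkn 0)).const_mul _
    · exact (i0 _ (hkn 2)).const_mul _
  refine ⟨fun t => (δ ^ 2 : ℝ) • k t + ((4 * Real.pi ^ 2)⁻¹ : ℝ) • iteratedDeriv 2 k t, ?_, ?_, ?_, ?_⟩
  · exact (hk.const_smul (δ ^ 2 : ℝ)).add (hk2.const_smul ((4 * Real.pi ^ 2)⁻¹ : ℝ))
  · apply HasCompactSupport.add
    · exact hkc.comp_left (g := fun z : ℂ => (δ ^ 2 : ℝ) • z) (smul_zero _)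
    · exact (hcs_iter2 k hkc 2).comp_left (g := fun z : ℂ => ((4 * Real.pi ^ 2)⁻¹ : ℝ) • z) (smul_zero _)
  · have : iteratedDeriv 2 k 0 = a ^ 2 • iteratedDeriv 2 h 0 := by
      have h12 : ContDiff ℝ ((2 : ℕ) : WithTop ℕ∞) h := contDiff_infty.mp h1 2
      have := iteratedDeriv_comp_const_smul (n := 2) (f := h) h12 a
      have := congrFun this 0
      simpa using this
    beta_reduce
    rw [this]
    have k0 : k 0 = h 0 := by simp [k]
    rw [k0]
    simp only [add_re, real_smul, re_ofReal_mul]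
    exact hpos
  · intro y hy
    obtain ⟨r, hr, hr'⟩ := h4 (y / a)
    rw [hFsum, hF, hr', ← ofReal_mul, ← ofReal_mul, ofReal_re]
    have : δ ^ 2 ≤ y ^ 2 := by rw [← sq_abs y]; gcongr
    apply mul_nonpos_of_nonpos_of_nonneg
    · linarith
    · positivity

lemma exists_G : ∃ G : ℂ → ℂ, ContinuousOn G {s | 1 ≤ s.re} ∧
    ∀ s : ℂ, 1 < s.re → LSeries (fun n => (ArithmeticFunction.vonMangoldt n : ℂ)) s = G s + 1 / (s - 1) := by
  refine ⟨_, ArithmeticFunction.vonMangoldt.continuousOn_LFunctionResidueClassAux (q := 1) 1, ?_⟩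
  intro s hs
  rw [ArithmeticFunction.vonMangoldt.eqOn_LFunctionResidueClassAux (q := 1) (a := 1) isUnit_one hs]
  have : (ArithmeticFunction.vonMangoldt.residueClass (1 : ZMod 1)) = fun n => ArithmeticFunction.vonMangoldt n := by
    ext n
    simp [ArithmeticFunction.vonMangoldt.residueClass, Set.indicator, eq_iff_true_of_subsingleton]
  simp [this]


lemma norm_exp_char (t y : ℝ) : ‖cexp (-(2 * Real.pi * t * y * I))‖ = 1 := by
  rw [Complex.norm_exp]; simp

lemma norm_exp_char' (t y : ℝ) : ‖cexp (2 * Real.pi * t * y * I)‖ = 1 := by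
  rw [Complex.norm_exp]; simp

lemma sum_identity (φ : ℝ → ℂ) (hφ : Integrable φ) (σ : ℝ) (hσ : 1 < σ) (u : ℝ) :
    HasSum (fun n : ℕ => ((ArithmeticFunction.vonMangoldt n / (n : ℝ) ^ σ : ℝ) : ℂ) * 𝓕 φ (Real.log n - u))
      (∫ t : ℝ, φ t * cexp (2 * Real.pi * t * u * I) *
        LSeries (fun n => (ArithmeticFunction.vonMangoldt n : ℂ)) (σ + 2 * Real.pi * t * I)) := by
  let c : ℕ → ℝ := fun n => ArithmeticFunction.vonMangoldt n / (n : ℝ) ^ σ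
  have hc0 : ∀ n, 0 ≤ c n := fun n => div_nonneg ArithmeticFunction.vonMangoldt_nonneg (by positivity)
  have hcs : Summable c := by
    have := (ArithmeticFunction.LSeriesSummable_vonMangoldt (s := (σ : ℂ)) (by simpa using hσ)).norm
    refine this.congr fun n => ?_
    rw [LSeries.norm_term_eq]
    split_ifs with h
    · simp [c, h]
    · simp [c, abs_of_nonneg ArithmeticFunction.vonMangoldt_nonneg]
  have hw : ∀ (n : ℕ) (t : ℝ), φ t * cexp (2 * Real.pi * t * u * I) *
      LSeries.term (fun n => (ArithmeticFunction.vonMangoldt n : ℂ)) (σ + 2 * Real.pi * t * I) n =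
      (c n : ℂ) * (φ t * cexp (-(2 * Real.pi * t * ((Real.log n - u : ℝ) : ℂ) * I))) := by
    intro n t
    rw [LSeries.term_def]
    split_ifs with h
    · simp [c, h]
    · have hn : (n : ℂ) ≠ 0 := by exact_mod_cast h
      have e1 : (n : ℂ) ^ ((σ : ℂ) + 2 * Real.pi * t * I) =
          (((n : ℝ) ^ σ : ℝ) : ℂ) * cexp (2 * Real.pi * t * (Real.log n) * I) := by
        rw [Complex.cpow_add _ _ hn, Complex.ofReal_cpow (by positivity)]
        rw [Complex.cpow_def_of_ne_zero hn (2 * Real.pi * t * I), ← Complex.natCast_log]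
        push_cast
        ring_nf
      have e2 : cexp (-(2 * Real.pi * t * ((Real.log n - u : ℝ) : ℂ) * I)) =
          cexp (2 * Real.pi * t * u * I) / cexp (2 * Real.pi * t * (Real.log n) * I) := by
        rw [← Complex.exp_sub]; push_cast; ring_nf
      rw [e1, e2]
      simp only [c, ofReal_div]
      rw [mul_div_assoc', mul_div_assoc', div_mul_div_comm]
      ring
  have hIntg : ∀ y : ℝ, Integrable fun t : ℝ => φ t * cexp (-(2 * Real.pi * t * y * I)) := by
    intro y
    apply hφ.mul_bdd (c := 1) (by fun_prop)
    exact Eventually.of_forall fun t => (norm_exp_char t y).le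
  have key := hasSum_integral_of_summable_integral_norm (μ := (volume : Measure ℝ))
    (F := fun (n : ℕ) (t : ℝ) => φ t * cexp (2 * Real.pi * t * u * I) *
      LSeries.term (fun n => (ArithmeticFunction.vonMangoldt n : ℂ)) (σ + 2 * Real.pi * t * I) n)
    (fun n => by
      simp_rw [hw n]
      exact (hIntg _).const_mul _)
    (by
      simp_rw [hw, norm_mul, norm_exp_char, mul_one, integral_const_mul]
      apply Summable.mul_right
      simpa [abs_of_nonneg (hc0 _)] using hcs)
  simp_rw [tsum_mul_left] at key
  have e : (fun n : ℕ => ((ArithmeticFunction.vonMangoldt n / (n : ℝ) ^ σ : ℝ) : ℂ) *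
      𝓕 φ (Real.log n - u)) = fun n : ℕ => ∫ t : ℝ, φ t * cexp (2 * Real.pi * t * u * I) *
      LSeries.term (fun n => (ArithmeticFunction.vonMangoldt n : ℂ)) (σ + 2 * Real.pi * t * I) n := by
    ext n
    simp_rw [hw, integral_const_mul]
    rw [fourier_eq]
  rw [e]
  exact key

lemma pole_identity (φ : ℝ → ℂ) (hφ : Integrable φ) (c : ℝ) (hc : 0 < c) (u : ℝ) :
    ∫ t : ℝ, φ t * cexp (2 * Real.pi * t * u * I) * (1 / (c + 2 * Real.pi * t * I)) =
    ∫ y in Set.Ioi (0 : ℝ), cexp (-(c * y)) * 𝓕 φ (y - u) := by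
  have h1 : ∀ t : ℝ, φ t * cexp (2 * Real.pi * t * u * I) * (1 / (c + 2 * Real.pi * t * I)) =
      ∫ y in Set.Ioi (0 : ℝ), φ t * cexp (2 * Real.pi * t * u * I) * cexp (-(c + 2 * Real.pi * t * I) * y) := by
    intro t
    rw [integral_const_mul, integral_exp_mul_complex_Ioi (by simpa using hc)]
    rw [neg_div_neg_eq]; simp
  simp_rw [h1]
  rw [integral_integral_swap]
  · congr 1; ext y
    rw [fourier_eq, ← integral_const_mul]
    congr 1; ext t
    have : cexp (2 * Real.pi * t * u * I) * cexp (-(c + 2 * Real.pi * t * I) * y) =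
        cexp (-(c * y)) * cexp (-(2 * Real.pi * t * ((y - u : ℝ) : ℂ) * I)) := by
      rw [← Complex.exp_add, ← Complex.exp_add]; push_cast; ring_nf
    rw [mul_assoc, this]; ring
  · have hexp : Integrable (fun y : ℝ => ((Real.exp (-c * y) : ℝ) : ℂ)) (volume.restrict (Set.Ioi 0)) :=
      (integrableOn_exp_mul_Ioi (by linarith) 0).ofReal
    have hp := hφ.mul_prod hexp
    have : Function.uncurry (fun t y : ℝ => φ t * cexp (2 * Real.pi * t * u * I) * cexp (-(c + 2 * Real.pi * t * I) * y))
      = fun z : ℝ × ℝ => (φ z.1 * ((Real.exp (-c * z.2) : ℝ) : ℂ)) * cexp (-(2 * Real.pi * z.1 * ((z.2 - u : ℝ) : ℂ) * I)) := by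
      ext ⟨t, y⟩
      simp only [Function.uncurry]
      rw [mul_assoc, mul_assoc, ofReal_exp, ← Complex.exp_add, mul_assoc (φ t), ← Complex.exp_add]
      push_cast; ring_nf
    rw [this]
    apply hp.mul_bdd (c := 1) (by fun_prop)
    exact Eventually.of_forall fun z => (norm_exp_char z.1 (z.2 - u)).le


lemma fourier_integrable (φ : ℝ → ℂ) (h1 : ContDiff ℝ (⊤ : ℕ∞) φ) (h2 : HasCompactSupport φ) :
    Integrable (𝓕 φ) ∧ ∫ y, 𝓕 φ y = φ 0 := by
  let f : SchwartzMap ℝ ℂ := h2.toSchwartzMap h1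
  have hf : (f : ℝ → ℂ) = φ := rfl
  have hF : ((𝓕 f : SchwartzMap ℝ ℂ) : ℝ → ℂ) = 𝓕 φ := by rw [SchwartzMap.fourier_coe, hf]
  refine ⟨hF ▸ (𝓕 f).integrable, ?_⟩
  have h : (𝓕⁻ (𝓕 f)) 0 = f 0 := by rw [FourierTransform.fourierInv_fourier_eq]
  rw [SchwartzMap.fourierInv_coe, hF, Real.fourierInv_eq'] at h
  rw [hf] at h
  simpa using h

lemma limit_identity (φ : ℝ → ℂ) (h1 : Continuous φ) (h2 : HasCompactSupport φ) (hF : Integrable (𝓕 φ))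
    (G : ℂ → ℂ) (hG : ContinuousOn G {s | 1 ≤ s.re}) (u : ℝ) :
    Tendsto (fun c : ℝ => (∫ t : ℝ, φ t * cexp (2 * Real.pi * t * u * I) * G (1 + c + 2 * Real.pi * t * I)) +
      ∫ y in Set.Ioi (0 : ℝ), cexp (-(c * y)) * 𝓕 φ (y - u)) (𝓝[>] 0)
      (𝓝 ((∫ t : ℝ, φ t * cexp (2 * Real.pi * t * u * I) * G (1 + 2 * Real.pi * t * I)) +
        ∫ y in Set.Ioi (0 : ℝ), 𝓕 φ (y - u))) := by
  have hsmall : ∀ᶠ c : ℝ in 𝓝[>] 0, c ∈ Set.Ioo (0:ℝ) 1 := Ioo_mem_nhdsGT one_pos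
  apply Tendsto.add
  · have hcont : ContinuousOn (fun z : ℝ × ℝ => G (1 + z.1 + 2 * Real.pi * z.2 * I)) (Set.Icc 0 1 ×ˢ Set.univ) := by
      apply hG.comp (by fun_prop)
      intro z hz
      simpa using hz.1.1
    obtain ⟨M, hM⟩ := (isCompact_Icc.prod h2).exists_bound_of_continuousOn
      (hcont.mono (Set.prod_mono le_rfl (Set.subset_univ (tsupport φ))))
    have hcc : ∀ c : ℝ, c ∈ Set.Icc (0:ℝ) 1 → Continuous (fun t : ℝ => G (1 + c + 2 * Real.pi * t * I)) := by
      intro c hc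
      have : ContinuousOn (fun t : ℝ => G (1 + c + 2 * Real.pi * t * I)) Set.univ :=
        hcont.comp (f := fun t : ℝ => (c, t)) (by fun_prop) (fun t _ => ⟨hc, trivial⟩)
      exact continuousOn_univ.mp this
    apply tendsto_integral_filter_of_dominated_convergence (fun t => ‖φ t‖ * M)
    · filter_upwards [hsmall] with c hc
      have := hcc c ⟨hc.1.le, hc.2.le⟩
      exact ((h1.mul (by fun_prop)).mul this).aestronglyMeasurable
    · filter_upwards [hsmall] with c hc
      refine Eventually.of_forall fun t => ?_
      rw [norm_mul, norm_mul, norm_exp_char', mul_one]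
      by_cases ht : t ∈ tsupport φ
      · exact mul_le_mul_of_nonneg_left (hM (c, t) ⟨⟨hc.1.le, hc.2.le⟩, ht⟩) (norm_nonneg _)
      · simp [image_eq_zero_of_notMem_tsupport ht]
    · exact (h1.integrable_of_hasCompactSupport h2).norm.mul_const _
    · refine Eventually.of_forall fun t => ?_
      apply Tendsto.const_mul
      have hcw := (hcont.comp (f := fun c : ℝ => (c, t)) (s := Set.Icc 0 1) (by fun_prop)
        (fun c hc => ⟨hc, trivial⟩)) 0 (by simp)
      have := hcw.tendsto.mono_left (nhdsWithin_mono 0 Set.Ioo_subset_Icc_self)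
      rw [nhdsWithin_Ioo_eq_nhdsGT one_pos] at this
      simpa [Function.comp_def] using this
  · have hFu : Integrable (fun y => 𝓕 φ (y - u)) := hF.comp_sub_right u
    apply tendsto_integral_filter_of_dominated_convergence (fun y => ‖𝓕 φ (y - u)‖)
    · refine Eventually.of_forall fun c => ?_
      exact (Continuous.aestronglyMeasurable (by fun_prop)).mul hFu.aestronglyMeasurable.restrict
    · filter_upwards [hsmall] with c hc
      filter_upwards [ae_restrict_mem measurableSet_Ioi] with y hy
      rw [norm_mul]
      apply mul_le_of_le_one_left (norm_nonneg _)
      rw [Complex.norm_exp]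
      have : 0 ≤ c * y := mul_nonneg hc.1.le (le_of_lt hy)
      simpa using this
    · exact hFu.norm.restrict
    · refine Eventually.of_forall fun y => ?_
      have hc : Continuous (fun c : ℝ => cexp (-(c * y)) * 𝓕 φ (y - u)) := by fun_prop
      have := (hc.tendsto 0).mono_left (nhdsWithin_le_nhds (s := Set.Ioi 0))
      simpa using this

lemma limit_u (φ : ℝ → ℂ) (hF : Integrable (𝓕 φ)) (h0 : ∫ y, 𝓕 φ y = φ 0) (G : ℂ → ℂ) :
    Tendsto (fun u : ℝ => (∫ t : ℝ, φ t * cexp (2 * Real.pi * t * u * I) * G (1 + 2 * Real.pi * t * I)) +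
        ∫ y in Set.Ioi (0 : ℝ), 𝓕 φ (y - u)) atTop (𝓝 (φ 0)) := by
  rw [← zero_add (φ 0), ← h0]
  apply Tendsto.add
  · have h := Real.zero_at_infty_fourier (fun t : ℝ => φ t * G (1 + 2 * Real.pi * t * I))
    have hneg : Tendsto (fun u : ℝ => -u) atTop (cocompact ℝ) :=
      tendsto_neg_atTop_atBot.mono_right atBot_le_cocompact
    refine (h.comp hneg).congr fun u => ?_
    simp only [Function.comp]
    rw [fourier_eq]
    congr 1; ext t
    push_cast
    ring_nf
  · have h := (aecover_Ioi (μ := (volume : Measure ℝ)) (tendsto_neg_atTop_atBot (G := ℝ))).integral_tendsto_of_countably_generated hF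
    refine h.congr fun u => ?_
    have := (measurePreserving_sub_right (volume : Measure ℝ) u).setIntegral_preimage_emb
      (measurableEmbedding_subRight u) (𝓕 φ) (Set.Ioi (-u))
    rw [← this]
    congr 2
    ext y; simp

lemma main_ineq (φ : ℝ → ℂ) (h1 : Continuous φ) (h2 : HasCompactSupport φ) (hF : Integrable (𝓕 φ))
    (G : ℂ → ℂ) (hG : ContinuousOn G {s | 1 ≤ s.re})
    (hGL : ∀ s : ℂ, 1 < s.re → LSeries (fun n => (ArithmeticFunction.vonMangoldt n : ℂ)) s = G s + 1 / (s - 1))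
    (u : ℝ) (b : ℕ → ℝ) (B : ℝ) (hB : HasSum b B)
    (hb : ∀ σ : ℝ, 1 < σ → ∀ n : ℕ, ArithmeticFunction.vonMangoldt n / (n : ℝ) ^ σ * (𝓕 φ (Real.log n - u)).re ≤ b n) :
    ((∫ t : ℝ, φ t * cexp (2 * Real.pi * t * u * I) * G (1 + 2 * Real.pi * t * I)) +
        ∫ y in Set.Ioi (0 : ℝ), 𝓕 φ (y - u)).re ≤ B := by
  have hφ := h1.integrable_of_hasCompactSupport h2 (μ := volume)
  have hlim := (Complex.continuous_re.tendsto _).comp (limit_identity φ h1 h2 hF G hG u)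
  refine le_of_tendsto hlim ?_
  filter_upwards [self_mem_nhdsWithin] with c hc
  have hc : 0 < c := hc
  simp only [Function.comp]
  have hs := Complex.hasSum_re (sum_identity φ hφ (1 + c) (by linarith) u)
  have e : ∫ t : ℝ, φ t * cexp (2 * Real.pi * t * u * I) *
        LSeries (fun n => (ArithmeticFunction.vonMangoldt n : ℂ)) (((1 + c : ℝ) : ℂ) + 2 * Real.pi * t * I) =
      (∫ t : ℝ, φ t * cexp (2 * Real.pi * t * u * I) * G (1 + c + 2 * Real.pi * t * I)) +
      ∫ y in Set.Ioi (0 : ℝ), cexp (-(c * y)) * 𝓕 φ (y - u) := by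
    rw [← pole_identity φ hφ c hc u, ← integral_add]
    · congr 1; ext t
      rw [hGL _ (by simpa using hc), ← mul_add]
      congr 3
      · push_cast; rfl
      · push_cast; ring
    · have : Continuous (fun t : ℝ => φ t * cexp (2 * Real.pi * t * u * I) * G (1 + c + 2 * Real.pi * t * I)) := by
        have : Continuous (fun t : ℝ => G (1 + c + 2 * Real.pi * t * I)) := by
          rw [← continuousOn_univ]
          apply hG.comp (by fun_prop)
          intro t _
          simpa using hc.le
        exact (h1.mul (by fun_prop)).mul this
      exact this.integrable_of_hasCompactSupport (h2.mul_right.mul_right)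
    · have : Continuous (fun t : ℝ => φ t * cexp (2 * Real.pi * t * u * I) * (1 / (c + 2 * Real.pi * t * I))) := by
        refine Continuous.mul (by fun_prop) (Continuous.div (by fun_prop) (by fun_prop) ?_)
        intro t h
        have := congrArg Complex.re h
        simp at this
        linarith
      exact this.integrable_of_hasCompactSupport (h2.mul_right.mul_right)
  rw [e] at hs
  refine hasSum_le (fun n => ?_) hs hB
  rw [re_ofReal_mul]
  exact hb (1 + c) (by linarith) n

lemma norm_fourier_le (φ : ℝ → ℂ) (y : ℝ) : ‖𝓕 φ y‖ ≤ ∫ t, ‖φ t‖ := by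
  rw [fourier_eq]
  refine (norm_integral_le_integral_norm _).trans_eq ?_
  simp_rw [norm_mul, norm_exp_char, mul_one]

lemma prime_in_interval (ε : ℝ) (hε : 0 < ε) :
    ∀ᶠ p : ℕ in atTop, ∃ q : ℕ, q.Prime ∧ p < q ∧ (q : ℝ) ≤ (1 + ε) * p := by
  obtain ⟨G, hG, hGL⟩ := exists_G
  have hlog : 0 < Real.log (1 + ε) := Real.log_pos (by linarith)
  obtain ⟨δ, hδ2⟩ : ∃ δ, Real.log (1 + ε) = 2 * δ := ⟨Real.log (1 + ε) / 2, by ring⟩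
  have hδ : 0 < δ := by linarith
  obtain ⟨φ, h1, h2, h3, h4⟩ := exists_kernel δ hδ
  obtain ⟨hF, h0⟩ := fourier_integrable φ h1 h2
  obtain ⟨C, hC⟩ := Chebyshev.psi_sub_theta_le_mul_sqrt
  let M : ℝ := ∫ t, ‖φ t‖
  have hM0 : 0 ≤ M := integral_nonneg fun t => norm_nonneg _
  have hM : ∀ y, (𝓕 φ y).re ≤ M := fun y => (Complex.re_le_norm _).trans (norm_fourier_le φ y)
  have hcast : Tendsto (fun p : ℕ => (p : ℝ)) atTop atTop := tendsto_natCast_atTop_atTop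
  have hu : Tendsto (fun p : ℕ => Real.log p + δ) atTop atTop :=
    tendsto_atTop_add_const_right _ _ (Real.tendsto_log_atTop.comp hcast)
  have hL := (Complex.continuous_re.tendsto _).comp ((limit_u φ hF h0 G).comp hu)
  have hev1 := hL.eventually (lt_mem_nhds (half_lt_self h3))
  have hE : Tendsto (fun p : ℕ => M * C * √(1 + ε) * (√(p : ℝ))⁻¹) atTop (𝓝 0) := by
    have := (tendsto_inv_atTop_zero.comp (Real.tendsto_sqrt_atTop.comp hcast)).const_mul (M * C * √(1 + ε))
    simpa using this
  have hev2 := hE.eventually (gt_mem_nhds (half_pos h3))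
  filter_upwards [hev1, hev2, eventually_ge_atTop 1] with p hp1 hp2 hp
  by_contra! hno
  have hpR : (1 : ℝ) ≤ p := by exact_mod_cast hp
  have hp0 : (0 : ℝ) < p := by linarith
  let S : Finset ℕ := (Finset.Ioc 0 ⌊(1 + ε) * (p : ℝ)⌋₊).filter (fun n => ¬ n.Prime)
  let b : ℕ → ℝ := fun n => if n ∈ S then ArithmeticFunction.vonMangoldt n * (M / p) else 0
  have hb0 : ∀ n, 0 ≤ b n := by
    intro n
    simp only [b]
    split_ifs
    · exact mul_nonneg ArithmeticFunction.vonMangoldt_nonneg (by positivity)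
    · rfl
  have hB : HasSum b (∑ n ∈ S, b n) := hasSum_sum_of_ne_finset_zero (fun n hn => by simp [b, hn])
  have hBle : ∑ n ∈ S, b n ≤ M * C * √(1 + ε) * (√(p : ℝ))⁻¹ := by
    have e1 : ∑ n ∈ S, b n = (∑ n ∈ S, ArithmeticFunction.vonMangoldt n) * (M / p) := by
      rw [Finset.sum_mul]
      exact Finset.sum_congr rfl fun n hn => by simp [b, hn]
    have e2 : ∑ n ∈ S, ArithmeticFunction.vonMangoldt n =
        Chebyshev.psi ((1 + ε) * p) - Chebyshev.theta ((1 + ε) * p) :=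
      (Chebyshev.psi_sub_theta_eq_sum_not_prime _).symm
    rw [e1, e2]
    refine (mul_le_mul_of_nonneg_right (hC _) (by positivity)).trans_eq ?_
    rw [Real.sqrt_mul (by linarith)]
    have hsq : √(p : ℝ) * √(p : ℝ) = p := Real.mul_self_sqrt hp0.le
    have hs0 : √(p : ℝ) ≠ 0 := (Real.sqrt_pos.mpr hp0).ne'
    rw [div_eq_mul_inv M, ← hsq, mul_inv]
    simp only [hsq]
    field_simp
  have hfin := main_ineq φ h1.continuous h2 hF G hG hGL (Real.log p + δ) b _ hB ?_
  · simp only [Function.comp] at hp1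
    linarith
  · intro σ hσ n
    have hΛ : 0 ≤ ArithmeticFunction.vonMangoldt n := ArithmeticFunction.vonMangoldt_nonneg
    rcases Nat.eq_zero_or_pos n with rfl | hn
    · simpa using hb0 0
    have hnR : (1 : ℝ) ≤ n := by exact_mod_cast hn
    have hn0 : (0 : ℝ) < n := by linarith
    by_cases hy : δ ≤ |Real.log n - (Real.log p + δ)|
    · exact (mul_nonpos_of_nonneg_of_nonpos (by positivity) (h4 _ hy)).trans (hb0 n)
    · push Not at hy
      rw [abs_lt] at hy
      have hpn : (p : ℝ) < n := (Real.log_lt_log_iff hp0 hn0).mp (by linarith)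
      have hnp : (n : ℝ) < (1 + ε) * p := by
        apply (Real.log_lt_log_iff hn0 (by positivity)).mp
        rw [Real.log_mul (by positivity) hp0.ne', hδ2]
        linarith
      have hnS : n ∈ S := by
        simp only [S, Finset.mem_filter, Finset.mem_Ioc]
        refine ⟨⟨hn, Nat.le_floor hnp.le⟩, fun hpr => ?_⟩
        have := hno n hpr (by exact_mod_cast hpn)
        linarith
      simp only [b, hnS, if_true]
      have hpow : (p : ℝ) ≤ (n : ℝ) ^ σ := by
        have : (n : ℝ) ^ (1 : ℝ) ≤ (n : ℝ) ^ σ := Real.rpow_le_rpow_of_exponent_le hnR hσ.le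
        rw [Real.rpow_one] at this
        linarith
      calc ArithmeticFunction.vonMangoldt n / (n : ℝ) ^ σ * (𝓕 φ (Real.log n - (Real.log p + δ))).re
          ≤ ArithmeticFunction.vonMangoldt n / (n : ℝ) ^ σ * M :=
            mul_le_mul_of_nonneg_left (hM _) (by positivity)
        _ ≤ ArithmeticFunction.vonMangoldt n / p * M := by gcongr
        _ = _ := by ring

/-- (p_succ - p)/p → 0 as p → ∞ along primes. -/
theorem prime_gap_ratio_tendsto_zero :
    Filter.Tendsto (fun p : ℕ => ((succPrime p : ℝ) - p) / p)
      (Filter.atTop ⊓ Filter.principal {p : ℕ | p.Prime}) (nhds 0) := by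
  refine Filter.Tendsto.mono_left ?_ inf_le_left
  rw [Metric.tendsto_nhds]
  intro ε hε
  filter_upwards [prime_in_interval (ε / 2) (by linarith), eventually_ge_atTop 1] with p hq hp
  obtain ⟨q, hq1, hq2, hq3⟩ := hq
  have hp0 : (0 : ℝ) < p := by exact_mod_cast hp
  have hmem : succPrime p ∈ {q : ℕ | q.Prime ∧ p < q} := Nat.sInf_mem ⟨q, hq1, hq2⟩
  have hle : succPrime p ≤ q := Nat.sInf_le ⟨hq1, hq2⟩
  have hle' : (succPrime p : ℝ) ≤ q := by exact_mod_cast hle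
  have hlt : (p : ℝ) < succPrime p := by exact_mod_cast hmem.2
  rw [Real.dist_eq, sub_zero, abs_of_nonneg (div_nonneg (by linarith) hp0.le), div_lt_iff₀ hp0]
  nlinarith
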